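/- In the non-existence instance, the infimum over randomized contracts γ of the regret R(γ) equals 1/e and is not attained: every randomized contract γ satisfies R(γ) > 1/e, and for every τ > 1/e there exists a randomized contract γ with R(γ) < τ. -/

import Mathlib

open Finset

variable {A Ω : Type} [Fintype A] [Fintype Ω] [Nonempty A] [Nonempty Ω]

/-- Agent's expected utility `U^a(p,c,a)` of action `a` under contract `p` and costs `c`. -/
noncomputable def Uag (F : A → Ω → ℝ) (p : Ω → ℝ) (c : A → ℝ) (a : A) : ℝ :=
  (∑ ω, F a ω * p ω) - c a

/-- Principal's expected utility when the agent plays action `a` under contract `p`. -/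
noncomputable def prinAct (F : A → Ω → ℝ) (r p : Ω → ℝ) (a : A) : ℝ :=
  ∑ ω, F a ω * (r ω - p ω)

/-- Principal's expected utility `U^p(p,c)`: the agent plays a best response,
with ties among best responses broken in favor of the principal. -/
noncomputable def Uprin (F : A → Ω → ℝ) (r p : Ω → ℝ) (c : A → ℝ) : ℝ :=
  sSup { x | ∃ a : A, (∀ a' : A, Uag F p c a' ≤ Uag F p c a) ∧ x = prinAct F r p a }

/-- A deterministic contract: nonnegative payments. -/
def IsContract (p : Ω → ℝ) : Prop := ∀ ω, 0 ≤ p ω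

/-- `OPT(c)`: the supremum over contracts of the principal's expected utility against `c`. -/
noncomputable def OPT (F : A → Ω → ℝ) (r : Ω → ℝ) (c : A → ℝ) : ℝ :=
  sSup { x | ∃ p : Ω → ℝ, IsContract p ∧ x = Uprin F r p c }

/-- The regret `R(p)` of a deterministic contract `p`. -/
noncomputable def regret (F : A → Ω → ℝ) (r : Ω → ℝ) (C : Set (A → ℝ)) (p : Ω → ℝ) : ℝ :=
  sSup { x | ∃ c ∈ C, x = OPT F r c - Uprin F r p c }

/-- Uncertainty level `d(C)`: the L∞-diameter of the uncertainty set. -/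
noncomputable def uncLevel (C : Set (A → ℝ)) : ℝ :=
  sSup { x | ∃ c ∈ C, ∃ c' ∈ C, x = ‖c - c'‖ }

/-- The assumptions defining a principal–agent instance `(A, Ω, r, C, F)`. -/
structure IsPAInstance (F : A → Ω → ℝ) (r : Ω → ℝ) (C : Set (A → ℝ)) : Prop where
  r_mem : ∀ ω, r ω ∈ Set.Icc (0:ℝ) 1
  F_mem : ∀ a ω, F a ω ∈ Set.Icc (0:ℝ) 1
  F_sum : ∀ a, ∑ ω, F a ω = 1
  C_nonempty : C.Nonempty
  C_mem : ∀ c ∈ C, ∀ a, c a ∈ Set.Icc (0:ℝ) 1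
  zero_action : ∃ a : A, ∀ c ∈ C, c a = 0

/-- A randomized contract: a finitely supported probability distribution over
deterministic contracts, represented as a finite tuple of contracts with probabilities. -/
structure RandCon (Ω : Type) where
  n : ℕ
  ps : Fin n → Ω → ℝ
  q : Fin n → ℝ
  q_nonneg : ∀ i, 0 ≤ q i
  q_sum : ∑ i, q i = 1

/-- All the contracts in the support are genuine (nonnegative) contracts. -/
def RandCon.valid {Ω : Type} (γ : RandCon Ω) : Prop := ∀ i ω, 0 ≤ γ.ps i ω

/-- Agent's expected utility `U^a(γ,c)` of a randomized contract. -/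
noncomputable def UagRand (F : A → Ω → ℝ) (γ : RandCon Ω) (c : A → ℝ) : ℝ :=
  ∑ i, γ.q i * (⨆ a : A, Uag F (γ.ps i) c a)

/-- Principal's expected utility `U^p(γ,c)` of a randomized contract. -/
noncomputable def UprinRand (F : A → Ω → ℝ) (r : Ω → ℝ) (γ : RandCon Ω) (c : A → ℝ) : ℝ :=
  ∑ i, γ.q i * Uprin F r (γ.ps i) c

/-- The regret `R(γ)` of a randomized contract. -/
noncomputable def regretRand (F : A → Ω → ℝ) (r : Ω → ℝ) (C : Set (A → ℝ))
    (γ : RandCon Ω) : ℝ :=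
  sSup { x | ∃ c ∈ C, x = OPT F r c - UprinRand F r γ c }

/-- Principal's expected utility `U^p(Γ,c)` under a menu of randomized contracts:
the agent selects an element maximizing its own expected utility, breaking ties in
favor of the principal. -/
noncomputable def UprinRMenu (F : A → Ω → ℝ) (r : Ω → ℝ) {K : ℕ} (Γ : Fin K → RandCon Ω)
    (c : A → ℝ) : ℝ :=
  sSup { x | ∃ i : Fin K, (∀ j : Fin K, UagRand F (Γ j) c ≤ UagRand F (Γ i) c) ∧
    x = UprinRand F r (Γ i) c }

/-- The regret `R(Γ)` of a menu of randomized contracts. -/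
noncomputable def regretRMenu (F : A → Ω → ℝ) (r : Ω → ℝ) (C : Set (A → ℝ)) {K : ℕ}
    (Γ : Fin K → RandCon Ω) : ℝ :=
  sSup { x | ∃ c ∈ C, x = OPT F r c - UprinRMenu F r Γ c }

/-!
Write `u = 1 - c 1` for the surplus of the productive action. A contract `p` earns the revenue of
the posted price `1 - (p 1 - p 0)` against a buyer of value `u`, minus the lump sum `p 0`, and
`OPT` is `u` itself. The problem is therefore regret-minimizing monopoly pricing with values in
`[0, 1]`.

For the lower bound, draw `u` from the measure of total mass `y⁻¹` with an atom of mass `1` at `1`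
and density `u⁻²` on `[y, 1]`. Every price earns at most `1` against it, while the surplus
integrates to `1 - log y`; hence the regret is at least `-y log y`, which is `1/e` at `y = 1/e`.
The inequality is strict because the regret of finitely many prices, being `u` minus a step
function, is not constant just below `u = 1`.

For the upper bound, randomize uniformly over the prices `(1 - 1/n) ^ j`, `j < n`. Each accepted
price contributes exactly its difference to the next price, so the expected revenue telescopes to
at least `u - 1/n - (1 - 1/n) ^ n`, and `(1 - 1/n) ^ n ≤ 1/e`.
-/

section PostedPrice

open Filter Topology MeasureTheory

theorem intervalIntegrable_inv_sq {a b : ℝ} (ha : 0 < a) (hb : 0 < b) :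
    IntervalIntegrable (fun u : ℝ => (u ^ 2)⁻¹) volume a b :=
  ContinuousOn.intervalIntegrable <| (continuousOn_pow 2).inv₀ fun _ hu =>
    pow_ne_zero 2 ((lt_min ha hb).trans_le hu.1).ne'

theorem integral_inv_sq {a b : ℝ} (ha : 0 < a) (hb : 0 < b) :
    ∫ u in a..b, (u ^ 2)⁻¹ = a⁻¹ - b⁻¹ := by
  have ne_zero : ∀ u ∈ Set.uIcc a b, u ≠ 0 := fun u hu => ((lt_min ha hb).trans_le hu.1).ne'
  rw [intervalIntegral.integral_eq_sub_of_hasDerivAt (f := fun u : ℝ => -u⁻¹)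
    (fun u hu => by simpa using (hasDerivAt_inv (ne_zero u hu)).fun_neg)
    (intervalIntegrable_inv_sq ha hb)]
  ring

theorem integral_lt_integral_of_eventually_lt_nhdsLT {f g : ℝ → ℝ} {a b : ℝ} (hab : a < b)
    (hf : IntervalIntegrable f volume a b) (hg : IntervalIntegrable g volume a b)
    (hle : ∀ u ∈ Set.Ioc a b, f u ≤ g u) (hlt : ∀ᶠ u in 𝓝[<] b, f u < g u) :
    ∫ u in a..b, f u < ∫ u in a..b, g u := by
  refine intervalIntegral.integral_lt_integral_of_ae_le_of_measure_setOfPred_lt_ne_zero hab.le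
    hf hg ?_ ?_
  · filter_upwards [ae_restrict_mem measurableSet_Ioc] with u hu using hle u hu
  · have near_b : {u | f u < g u} ∩ Set.Ioc a b ∈ 𝓝[<] b :=
      inter_mem hlt (mem_of_superset (Ioo_mem_nhdsLT hab) Set.Ioo_subset_Ioc_self)
    obtain ⟨l, hl, hsub⟩ := mem_nhdsLT_iff_exists_Ioo_subset.1 near_b
    rw [Measure.restrict_apply' measurableSet_Ioc]
    exact (((Measure.measure_Ioo_pos volume).2 hl).trans_le (measure_mono hsub)).ne'

/-- The revenue of the posted price `m` against a buyer of value `u`, who buys when indifferent.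
Prices of either sign are allowed. -/
noncomputable def revenue (m u : ℝ) : ℝ := if m ≤ u then m else 0

theorem revenue_self (u : ℝ) : revenue u u = u := if_pos le_rfl

theorem revenue_le_value {u : ℝ} (hu : 0 ≤ u) (m : ℝ) : revenue m u ≤ u := by
  unfold revenue
  split_ifs <;> assumption

theorem revenue_nonneg {m : ℝ} (hm : 0 ≤ m) (u : ℝ) : 0 ≤ revenue m u := by
  unfold revenue
  split_ifs <;> positivity

theorem revenue_mul_eq_indicator (m : ℝ) (w : ℝ → ℝ) :
    (fun u => revenue m u * w u) = (Set.Ici m).indicator fun u => m * w u := by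
  ext u
  simp only [revenue, Set.indicator_apply, Set.mem_Ici, ite_mul, zero_mul]

theorem intervalIntegrable_revenue_mul {w : ℝ → ℝ} {a b : ℝ}
    (hw : IntervalIntegrable w volume a b) (m : ℝ) :
    IntervalIntegrable (fun u => revenue m u * w u) volume a b := by
  rw [revenue_mul_eq_indicator, intervalIntegrable_iff]
  exact (intervalIntegrable_iff.1 (hw.const_mul m)).indicator measurableSet_Ici

theorem integral_revenue_mul {y b m : ℝ} (hyb : y ≤ b) (hmb : m ≤ b) (w : ℝ → ℝ) :
    ∫ u in y..b, revenue m u * w u = m * ∫ u in (max y m)..b, w u := by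
  have accepted : (Set.Ioc y b ∩ Set.Ici m : Set ℝ) =ᵐ[volume] Set.Ioc (max y m) b := by
    rw [← Set.Ioc_inter_Ioi]
    exact (ae_eq_refl _).inter Ioi_ae_eq_Ici.symm
  rw [revenue_mul_eq_indicator, intervalIntegral.integral_of_le hyb,
    setIntegral_indicator measurableSet_Ici, setIntegral_congr_set accepted,
    ← intervalIntegral.integral_of_le (max_le hyb hmb), intervalIntegral.integral_const_mul]

theorem revenue_one_add_integral_le_one {y : ℝ} (hy : 0 < y) (hy1 : y ≤ 1) (m : ℝ) :
    revenue m 1 + ∫ u in y..1, revenue m u * (u ^ 2)⁻¹ ≤ 1 := by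
  rcases le_or_gt m 1 with hm | hm
  · have hmax : 0 < max y m := lt_max_of_lt_left hy
    calc revenue m 1 + ∫ u in y..1, revenue m u * (u ^ 2)⁻¹
        = m + m * ((max y m)⁻¹ - 1⁻¹) := by
          rw [integral_revenue_mul hy1 hm, integral_inv_sq hmax one_pos, revenue, if_pos hm]
      _ = m / max y m := by ring
      _ ≤ 1 := div_le_one_of_le₀ (le_max_right y m) hmax.le
  · have rejected : ∀ u ≤ 1, revenue m u = 0 := fun u hu => if_neg (hu.trans_lt hm).not_ge
    have integral_eq_zero : ∫ u in y..1, revenue m u * (u ^ 2)⁻¹ = 0 := by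
      refine intervalIntegral.integral_zero_ae (ae_of_all _ fun u hu => ?_)
      rw [rejected u (Set.uIoc_of_le hy1 ▸ hu).2, zero_mul]
    rw [rejected 1 le_rfl, integral_eq_zero]
    norm_num

variable {ι : Type*} [Fintype ι]

/-- The expected revenue, against a buyer of value `u`, of charging price `m i` with
weight `q i`. -/
noncomputable def meanRevenue (q m : ι → ℝ) (u : ℝ) : ℝ := ∑ i, q i * revenue (m i) u

theorem meanRevenue_mul (q m : ι → ℝ) (w : ℝ → ℝ) :
    (fun u => meanRevenue q m u * w u) = fun u => ∑ i, q i * (revenue (m i) u * w u) := by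
  ext u
  simp only [meanRevenue, sum_mul, mul_assoc]

theorem intervalIntegrable_meanRevenue_mul {w : ℝ → ℝ} {a b : ℝ}
    (hw : IntervalIntegrable w volume a b) (q m : ι → ℝ) :
    IntervalIntegrable (fun u => meanRevenue q m u * w u) volume a b := by
  rw [meanRevenue_mul, ← sum_fn]
  exact IntervalIntegrable.sum univ fun i _ =>
    (intervalIntegrable_revenue_mul hw (m i)).const_mul (q i)

theorem meanRevenue_one_add_integral_le_one {y : ℝ} (hy : 0 < y) (hy1 : y ≤ 1) {q : ι → ℝ}
    (hq : ∀ i, 0 ≤ q i) (hq1 : ∑ i, q i = 1) (m : ι → ℝ) :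
    meanRevenue q m 1 + ∫ u in y..1, meanRevenue q m u * (u ^ 2)⁻¹ ≤ 1 := by
  have integrable (i : ι) :
      IntervalIntegrable (fun u => q i * (revenue (m i) u * (u ^ 2)⁻¹)) volume y 1 :=
    (intervalIntegrable_revenue_mul (intervalIntegrable_inv_sq hy one_pos) (m i)).const_mul (q i)
  calc meanRevenue q m 1 + ∫ u in y..1, meanRevenue q m u * (u ^ 2)⁻¹
      = ∑ i, q i * (revenue (m i) 1 + ∫ u in y..1, revenue (m i) u * (u ^ 2)⁻¹) := by
        rw [meanRevenue_mul, intervalIntegral.integral_finsetSum fun i _ => integrable i]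
        simp only [meanRevenue, intervalIntegral.integral_const_mul, mul_add, sum_add_distrib]
    _ ≤ ∑ i, q i * 1 := by
        gcongr with i
        · exact hq i
        · exact revenue_one_add_integral_le_one hy hy1 (m i)
    _ = 1 := by simp only [mul_one, hq1]

theorem revenue_eventually_eq_nhdsLT (m x : ℝ) :
    ∀ᶠ u in 𝓝[<] x, revenue m u = if m < x then m else 0 := by
  rcases lt_or_ge m x with hmx | hmx
  · filter_upwards [Ioo_mem_nhdsLT hmx] with u hu
    rw [revenue, if_pos hu.1.le, if_pos hmx]
  · filter_upwards [self_mem_nhdsWithin] with u (hu : u < x)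
    rw [revenue, if_neg (hu.trans_le hmx).not_ge, if_neg hmx.not_gt]

theorem exists_eventually_meanRevenue_eq_nhdsLT (q m : ι → ℝ) (x : ℝ) :
    ∃ L, ∀ᶠ u in 𝓝[<] x, meanRevenue q m u = L := by
  refine ⟨∑ i, q i * if m i < x then m i else 0, ?_⟩
  filter_upwards [eventually_all.2 fun i => revenue_eventually_eq_nhdsLT (m i) x] with u hu
  simp only [meanRevenue, hu]

theorem eventually_sub_meanRevenue_lt_nhdsLT {q m : ι → ℝ} {x R : ℝ}
    (hR : ∀ᶠ u in 𝓝[<] x, u - meanRevenue q m u ≤ R) :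
    ∀ᶠ u in 𝓝[<] x, u - meanRevenue q m u < R := by
  obtain ⟨L, hL⟩ := exists_eventually_meanRevenue_eq_nhdsLT q m x
  have limit_le : x - L ≤ R := by
    have tendsto_sub : Tendsto (fun u => u - L) (𝓝[<] x) (𝓝 (x - L)) :=
      (continuous_sub_right L).continuousWithinAt
    refine le_of_tendsto tendsto_sub ?_
    filter_upwards [hR, hL] with u huR huL
    rwa [huL] at huR
  filter_upwards [hL, self_mem_nhdsWithin] with u huL (hux : u < x)
  rw [huL]
  linarith

theorem integral_sub_meanRevenue_mul_inv_sq_lt {y : ℝ} (hy : 0 < y) (hy1 : y < 1) {q m : ι → ℝ}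
    {R : ℝ} (hR : ∀ u ∈ Set.Icc y 1, u - meanRevenue q m u ≤ R) :
    ∫ u in y..1, (u - meanRevenue q m u) * (u ^ 2)⁻¹ < R * (y⁻¹ - 1) := by
  have weight_pos : ∀ u, y ≤ u → 0 < (u ^ 2)⁻¹ := fun u hu => by
    have := hy.trans_le hu
    positivity
  have weight_integrable := intervalIntegrable_inv_sq hy one_pos
  have regret_integrable :
      IntervalIntegrable (fun u => (u - meanRevenue q m u) * (u ^ 2)⁻¹) volume y 1 := by
    simp only [sub_mul]
    exact (weight_integrable.continuousOn_mul (continuousOn_id' _)).sub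
      (intervalIntegrable_meanRevenue_mul weight_integrable q m)
  have le_on (u : ℝ) (hu : u ∈ Set.Ioc y 1) :
      (u - meanRevenue q m u) * (u ^ 2)⁻¹ ≤ R * (u ^ 2)⁻¹ :=
    mul_le_mul_of_nonneg_right (hR u (Set.Ioc_subset_Icc_self hu)) (weight_pos u hu.1.le).le
  have lt_near_one : ∀ᶠ u in 𝓝[<] 1, (u - meanRevenue q m u) * (u ^ 2)⁻¹ < R * (u ^ 2)⁻¹ := by
    have le_near_one : ∀ᶠ u in 𝓝[<] 1, u - meanRevenue q m u ≤ R := by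
      filter_upwards [Ioo_mem_nhdsLT hy1] with u hu using hR u (Set.Ioo_subset_Icc_self hu)
    filter_upwards [eventually_sub_meanRevenue_lt_nhdsLT le_near_one, Ioo_mem_nhdsLT hy1]
      with u hlt hu using mul_lt_mul_of_pos_right hlt (weight_pos u hu.1.le)
  calc ∫ u in y..1, (u - meanRevenue q m u) * (u ^ 2)⁻¹
      < ∫ u in y..1, R * (u ^ 2)⁻¹ :=
        integral_lt_integral_of_eventually_lt_nhdsLT hy1 regret_integrable
          (weight_integrable.const_mul R) le_on lt_near_one
    _ = R * (y⁻¹ - 1) := by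
        rw [intervalIntegral.integral_const_mul, integral_inv_sq hy one_pos, inv_one]

theorem negMulLog_lt_of_sub_meanRevenue_le {y : ℝ} (hy : 0 < y) (hy1 : y < 1) {q m : ι → ℝ}
    (hq : ∀ i, 0 ≤ q i) (hq1 : ∑ i, q i = 1) {R : ℝ}
    (hR : ∀ u ∈ Set.Icc y 1, u - meanRevenue q m u ≤ R) :
    Real.negMulLog y < R := by
  have weight_integrable := intervalIntegrable_inv_sq hy one_pos
  have surplus_integral : ∫ u in y..1, u * (u ^ 2)⁻¹ = -Real.log y := by
    calc ∫ u in y..1, u * (u ^ 2)⁻¹ = ∫ u in y..1, u⁻¹ := by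
          congr 1 with u
          rw [sq, mul_inv, mul_comm]
          simpa only [inv_inv] using mul_self_mul_inv u⁻¹
      _ = -Real.log y := by rw [integral_inv_of_pos hy one_pos, one_div, Real.log_inv]
  have regret_integral : ∫ u in y..1, (u - meanRevenue q m u) * (u ^ 2)⁻¹
      = -Real.log y - ∫ u in y..1, meanRevenue q m u * (u ^ 2)⁻¹ := by
    simp only [sub_mul]
    rw [intervalIntegral.integral_sub (weight_integrable.continuousOn_mul (continuousOn_id' _))
      (intervalIntegrable_meanRevenue_mul weight_integrable q m), surplus_integral]
  have regret_integral_lt := integral_sub_meanRevenue_mul_inv_sq_lt hy hy1 hR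
  have revenue_le := meanRevenue_one_add_integral_le_one hy hy1.le hq hq1 m
  have regret_at_one := hR 1 ⟨hy1.le, le_rfl⟩
  have neg_log_lt : -Real.log y < R * y⁻¹ := by linarith
  calc Real.negMulLog y = -Real.log y * y := by rw [Real.negMulLog]; ring
    _ < R * y⁻¹ * y := mul_lt_mul_of_pos_right neg_log_lt hy
    _ = R := inv_mul_cancel_right₀ hy.ne' R

theorem sub_sum_revenue_pow_le {δ u : ℝ} (hδ : 0 ≤ δ) (hδ1 : δ ≤ 1) (hu : u ≤ 1) (n : ℕ) :
    u - ∑ j ∈ range n, δ * revenue ((1 - δ) ^ j) u ≤ (1 - δ) ^ n + δ := by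
  induction n with
  | zero =>
    simp only [range_zero, sum_empty, pow_zero]
    linarith
  | succ n ih =>
    have price_nonneg (j : ℕ) : 0 ≤ (1 - δ) ^ j := pow_nonneg (sub_nonneg.2 hδ1) j
    rw [pow_succ]
    rcases le_or_gt ((1 - δ) ^ n) u with accepted | rejected
    · rw [sum_range_succ, revenue, if_pos accepted]
      linarith
    · have revenue_sum_nonneg : 0 ≤ ∑ j ∈ range (n + 1), δ * revenue ((1 - δ) ^ j) u :=
        sum_nonneg fun j _ => mul_nonneg hδ (revenue_nonneg (price_nonneg j) u)
      have price_le_one : (1 - δ) ^ n ≤ 1 := pow_le_one₀ (sub_nonneg.2 hδ1) (by linarith)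
      have := mul_le_of_le_one_right hδ price_le_one
      linarith

end PostedPrice

section BestResponse

variable {Act Out : Type} [Fintype Out] {F : Act → Out → ℝ} {r p : Out → ℝ} {c : Act → ℝ}

/-- Membership `a ∈ A*(p,c)` in the agent's best-response set. -/
def IsBestResponse (F : Act → Out → ℝ) (p : Out → ℝ) (c : Act → ℝ) (a : Act) : Prop :=
  ∀ a', Uag F p c a' ≤ Uag F p c a

theorem Uprin_eq_prinAct {a : Act} (ha : IsBestResponse F p c a)
    (hmax : ∀ b, IsBestResponse F p c b → prinAct F r p b ≤ prinAct F r p a) :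
    Uprin F r p c = prinAct F r p a := by
  refine IsGreatest.csSup_eq ⟨⟨a, ha, rfl⟩, ?_⟩
  rintro _ ⟨b, hb, rfl⟩
  exact hmax b hb

variable [Finite Act]

theorem IsBestResponse.prinAct_le_Uprin {a : Act} (ha : IsBestResponse F p c a) :
    prinAct F r p a ≤ Uprin F r p c := by
  refine le_csSup ((Set.finite_range (prinAct F r p)).bddAbove.mono ?_) ⟨a, ha, rfl⟩
  rintro _ ⟨b, -, rfl⟩
  exact ⟨b, rfl⟩

variable [Nonempty Act]

theorem exists_isBestResponse (F : Act → Out → ℝ) (p : Out → ℝ) (c : Act → ℝ) :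
    ∃ a, IsBestResponse F p c a :=
  Finite.exists_max (Uag F p c)

theorem iInf_prinAct_le_Uprin (F : Act → Out → ℝ) (r p : Out → ℝ) (c : Act → ℝ) :
    ⨅ a, prinAct F r p a ≤ Uprin F r p c := by
  obtain ⟨a, ha⟩ := exists_isBestResponse F p c
  exact (ciInf_le (Set.finite_range _).bddBelow a).trans ha.prinAct_le_Uprin

theorem OPT_sub_UprinRand_le_regretRand {C : Set (Act → ℝ)} {M : ℝ} (hM : ∀ c ∈ C, OPT F r c ≤ M)
    (γ : RandCon Out) (hc : c ∈ C) : OPT F r c - UprinRand F r γ c ≤ regretRand F r C γ := by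
  refine le_csSup ⟨M - ∑ i, γ.q i * ⨅ a, prinAct F r (γ.ps i) a, ?_⟩ ⟨c, hc, rfl⟩
  rintro _ ⟨c, hc, rfl⟩
  refine sub_le_sub (hM c hc) (sum_le_sum fun i _ => ?_)
  exact mul_le_mul_of_nonneg_left (iInf_prinAct_le_Uprin F r (γ.ps i) c) (γ.q_nonneg i)

end BestResponse

section Instance

/-- Outcome distributions under which action `a` leads to outcome `a` with certainty; on `Fin 2`
this is the `F` of the non-existence instance. -/
def revealingF {S : Type} [DecidableEq S] (a ω : S) : ℝ := if a = ω then 1 else 0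

theorem Uag_revealingF {S : Type} [Fintype S] [DecidableEq S] (p c : S → ℝ) (a : S) :
    Uag revealingF p c a = p a - c a := by
  simp [Uag, revealingF]

theorem prinAct_revealingF {S : Type} [Fintype S] [DecidableEq S] (r p : S → ℝ) (a : S) :
    prinAct revealingF r p a = r a - p a := by
  simp [prinAct, revealingF]

/-- The rewards `r` of the non-existence instance. -/
def unitReward (ω : Fin 2) : ℝ := if ω = 1 then 1 else 0

/-- The uncertainty set `C` of the non-existence instance. -/
def freeActionCosts : Set (Fin 2 → ℝ) := {c | c 0 = 0 ∧ 0 ≤ c 1 ∧ c 1 ≤ 1}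

theorem isBestResponse_revealingF_zero_iff {p c : Fin 2 → ℝ} :
    IsBestResponse revealingF p c 0 ↔ p 1 - p 0 ≤ c 1 - c 0 := by
  simp only [IsBestResponse, Fin.forall_fin_two, Uag_revealingF, le_refl, true_and]
  constructor <;> intro h <;> linarith

theorem isBestResponse_revealingF_one_iff {p c : Fin 2 → ℝ} :
    IsBestResponse revealingF p c 1 ↔ c 1 - c 0 ≤ p 1 - p 0 := by
  simp only [IsBestResponse, Fin.forall_fin_two, Uag_revealingF, le_refl, and_true]
  constructor <;> intro h <;> linarith

theorem prinAct_unitReward_zero (p : Fin 2 → ℝ) : prinAct revealingF unitReward p 0 = -p 0 := by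
  simp [prinAct_revealingF, unitReward]

theorem prinAct_unitReward_one (p : Fin 2 → ℝ) : prinAct revealingF unitReward p 1 = 1 - p 1 := by
  simp [prinAct_revealingF, unitReward]

theorem Uprin_unitReward {c : Fin 2 → ℝ} (hc : c ∈ freeActionCosts) (p : Fin 2 → ℝ) :
    Uprin revealingF unitReward p c = revenue (1 - (p 1 - p 0)) (1 - c 1) - p 0 := by
  obtain ⟨hc0, -, hc1⟩ := hc
  rcases le_or_gt (c 1) (p 1 - p 0) with works | shirks
  · have best : IsBestResponse revealingF p c 1 :=
      isBestResponse_revealingF_one_iff.2 (by linarith)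
    rw [Uprin_eq_prinAct best, prinAct_unitReward_one, revenue, if_pos (by linarith)]
    · ring
    · simp only [Fin.forall_fin_two, isBestResponse_revealingF_zero_iff, prinAct_unitReward_zero,
        prinAct_unitReward_one, le_refl, implies_true, and_true]
      intro h
      linarith
  · have best : IsBestResponse revealingF p c 0 :=
      isBestResponse_revealingF_zero_iff.2 (by linarith)
    rw [Uprin_eq_prinAct best, prinAct_unitReward_zero, revenue, if_neg (by linarith)]
    · ring
    · simp only [Fin.forall_fin_two, isBestResponse_revealingF_one_iff, le_refl, implies_true,
        true_and]
      intro h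
      linarith

theorem isContract_zero_pair {x : ℝ} (hx : 0 ≤ x) : IsContract ![0, x] := by
  simpa [IsContract, Fin.forall_fin_two] using hx

theorem OPT_unitReward {c : Fin 2 → ℝ} (hc : c ∈ freeActionCosts) :
    OPT revealingF unitReward c = 1 - c 1 := by
  refine IsGreatest.csSup_eq ⟨⟨![0, c 1], isContract_zero_pair hc.2.1, ?_⟩, ?_⟩
  · rw [Uprin_unitReward hc]
    simp [revenue_self]
  · rintro _ ⟨p, hp, rfl⟩
    rw [Uprin_unitReward hc]
    exact (sub_le_self _ (hp 0)).trans (revenue_le_value (sub_nonneg.2 hc.2.2) _)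

theorem sub_meanRevenue_le_regretRand {γ : RandCon (Fin 2)} (hγ : γ.valid) {u : ℝ}
    (hu : u ∈ Set.Icc 0 1) :
    u - meanRevenue γ.q (fun i => 1 - (γ.ps i 1 - γ.ps i 0)) u ≤
      regretRand revealingF unitReward freeActionCosts γ := by
  have hc : ![0, 1 - u] ∈ freeActionCosts := by
    simpa [freeActionCosts, and_comm] using hu
  have OPT_le_one : ∀ c ∈ freeActionCosts, OPT revealingF unitReward c ≤ 1 := fun c hc => by
    rw [OPT_unitReward hc]
    exact sub_le_self _ hc.2.1
  refine le_trans ?_ (OPT_sub_UprinRand_le_regretRand OPT_le_one γ hc)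
  simp only [OPT_unitReward hc, UprinRand, Uprin_unitReward hc, Matrix.cons_val_one,
    Matrix.cons_val_fin_one, sub_sub_cancel]
  refine sub_le_sub_left (sum_le_sum fun i _ => ?_) u
  exact mul_le_mul_of_nonneg_left (sub_le_self _ (hγ i 0)) (γ.q_nonneg i)

theorem inv_exp_one_lt_regretRand {γ : RandCon (Fin 2)} (hγ : γ.valid) :
    (Real.exp 1)⁻¹ < regretRand revealingF unitReward freeActionCosts γ := by
  have exp_pos : 0 < Real.exp (-1) := Real.exp_pos _
  have exp_lt_one : Real.exp (-1) < 1 := Real.exp_lt_one_iff.2 (by norm_num)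
  calc (Real.exp 1)⁻¹ = Real.negMulLog (Real.exp (-1)) := by
        rw [Real.negMulLog, Real.log_exp, Real.exp_neg]; ring
    _ < regretRand revealingF unitReward freeActionCosts γ :=
      negMulLog_lt_of_sub_meanRevenue_le exp_pos exp_lt_one γ.q_nonneg γ.q_sum fun _ hu =>
        sub_meanRevenue_le_regretRand hγ (Set.Icc_subset_Icc_left exp_pos.le hu)

/-- The uniform randomization over the contracts posting the prices `(1 - 1/n) ^ j` for `j < n`. -/
noncomputable def geometricContract (n : ℕ) [NeZero n] : RandCon (Fin 2) where
  n := n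
  ps j := ![0, 1 - (1 - 1 / n) ^ (j : ℕ)]
  q _ := 1 / n
  q_nonneg _ := by positivity
  q_sum := by simp

theorem geometricContract_valid (n : ℕ) [NeZero n] : (geometricContract n).valid := fun _ =>
  isContract_zero_pair <| sub_nonneg.2 <|
    pow_le_one₀ (Nat.one_sub_one_div_cast_nonneg n) (Nat.one_sub_one_div_cast_le_one n)

theorem regretRand_geometricContract_le (n : ℕ) [NeZero n] :
    regretRand revealingF unitReward freeActionCosts (geometricContract n) ≤
      (Real.exp 1)⁻¹ + 1 / n := by
  refine Real.sSup_le ?_ (by positivity)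
  rintro _ ⟨c, hc, rfl⟩
  have UprinRand_eq : UprinRand revealingF unitReward (geometricContract n) c =
      ∑ j ∈ range n, 1 / n * revenue ((1 - 1 / n) ^ j) (1 - c 1) := by
    rw [← Fin.sum_univ_eq_sum_range fun j : ℕ => 1 / n * revenue ((1 - 1 / n) ^ j) (1 - c 1)]
    refine sum_congr rfl fun j _ => ?_
    simp [Uprin_unitReward hc, geometricContract]
  rw [OPT_unitReward hc, UprinRand_eq]
  calc 1 - c 1 - ∑ j ∈ range n, 1 / n * revenue ((1 - 1 / n) ^ j) (1 - c 1)
      ≤ (1 - 1 / (n : ℝ)) ^ n + 1 / n :=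
        sub_sum_revenue_pow_le (by positivity) (sub_nonneg.1 (Nat.one_sub_one_div_cast_nonneg n))
          (sub_le_self _ hc.2.1) n
    _ ≤ (Real.exp 1)⁻¹ + 1 / n := by
        rw [← Real.exp_neg]
        gcongr
        exact Real.one_sub_div_pow_le_exp_neg (mod_cast NeZero.one_le)

theorem exists_regretRand_lt {τ : ℝ} (hτ : (Real.exp 1)⁻¹ < τ) :
    ∃ γ : RandCon (Fin 2), γ.valid ∧ regretRand revealingF unitReward freeActionCosts γ < τ := by
  obtain ⟨n, hn⟩ := exists_nat_one_div_lt (sub_pos.2 hτ)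
  refine ⟨geometricContract (n + 1), geometricContract_valid _, ?_⟩
  have := regretRand_geometricContract_le (n + 1)
  push_cast at this
  linarith

end Instance

/-- In the non-existence instance, the infimum of the regret over
randomized contracts equals `1/e` and is not attained: every randomized contract has
regret strictly greater than `1/e`, while regrets arbitrarily close to `1/e` are
achievable. -/
theorem nonexistence_instance_randomized
    (F : Fin 2 → Fin 2 → ℝ) (hF : F = fun a ω => if a = ω then (1:ℝ) else 0)
    (r : Fin 2 → ℝ) (hr : r = fun ω => if ω = 1 then (1:ℝ) else 0)
    (C : Set (Fin 2 → ℝ))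
    (hC : C = {c | c 0 = 0 ∧ 0 ≤ c 1 ∧ c 1 ≤ 1}) :
    sInf { x | ∃ γ : RandCon (Fin 2), γ.valid ∧ x = regretRand F r C γ }
        = (Real.exp 1)⁻¹ ∧
      (∀ γ : RandCon (Fin 2), γ.valid → regretRand F r C γ > (Real.exp 1)⁻¹) ∧
      (∀ τ : ℝ, τ > (Real.exp 1)⁻¹ →
        ∃ γ : RandCon (Fin 2), γ.valid ∧ regretRand F r C γ < τ) := by
  have hF : F = revealingF := hF
  have hr : r = unitReward := hr
  have hC : C = freeActionCosts := hC
  subst hF hr hC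
  refine ⟨csInf_eq_of_forall_ge_of_forall_gt_exists_lt ?_ ?_ ?_,
    fun γ hγ => inv_exp_one_lt_regretRand hγ, fun τ hτ => exists_regretRand_lt hτ⟩
  · exact ⟨_, geometricContract 1, geometricContract_valid 1, rfl⟩
  · rintro _ ⟨γ, hγ, rfl⟩
    exact (inv_exp_one_lt_regretRand hγ).le
  · intro τ hτ
    obtain ⟨γ, hγ, hlt⟩ := exists_regretRand_lt hτ
    exact ⟨_, ⟨γ, hγ, rfl⟩, hlt⟩
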